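/- Upper enhancement via cutsets, case p > p' (Proposition 3.1, item 2). Let (V, E, ends, α) be a finite graph with boundary condition, p ∈ (0,1), q > 0, and suppose p > p'. Let Ê ⊆ E be such that every e ∈ Ê admits a cutset included in E∖Ê. For e ∈ Ê set ε̂_e := (p−p') · P_{max(p,p')}({ω : ∃ χ ∈ Q_{E∖Ê}(e) with ω e' = false for every e' ∈ χ}), and set ε̂_e := 0 for e ∉ Ê. Then φ^α_{G,p,q} ≼ P_{(p−ε̂_e)_{e∈E}}. -/

import Mathlib

open scoped Classical

noncomputable section

namespace FKPaper

variable {V E : Type*}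

/-- One-step adjacency between wired vertices through an edge in `F`. -/
def Step (ends : E → Sym2 V) (α : Setoid V) (F : Set E) (x y : Quotient α) : Prop :=
  ∃ e ∈ F, Sym2.map (Quotient.mk α) (ends e) = s(x, y)

/-- Setoid of connected components of the wired multigraph with edge set `F`. -/
def connSetoid (ends : E → Sym2 V) (α : Setoid V) (F : Set E) : Setoid (Quotient α) :=
  Relation.EqvGen.setoid (Step ends α F)

/-- Connectivity in the wired multigraph with edge set `F`. -/
def Conn (ends : E → Sym2 V) (α : Setoid V) (F : Set E) (x y : Quotient α) : Prop :=
  (connSetoid ends α F).r x y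

/-- The two endpoints of `e` are joined in the wired multigraph with edge set `F`. -/
def EndsConn (ends : E → Sym2 V) (α : Setoid V) (F : Set E) (e : E) : Prop :=
  ∀ x y : V, ends e = s(x, y) → Conn ends α F (Quotient.mk α x) (Quotient.mk α y)

/-- Number of connected components `k(ω, α)`. -/
def numComponents (ends : E → Sym2 V) (α : Setoid V) (ω : E → Bool) : ℕ :=
  Nat.card (Quotient (connSetoid ends α {e | ω e = true}))

/-- `p' = p / (p + q (1 - p))`. -/
def pPrime (p q : ℝ) : ℝ := p / (p + q * (1 - p))

/-- Total mass of a set under a weight function. -/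
def massOf {ι : Type*} [Fintype ι] (w : ι → ℝ) (A : Set ι) : ℝ :=
  ∑ x ∈ Finset.univ.filter (· ∈ A), w x

/-- Normalized probability of a set under a weight function. -/
def probOf {ι : Type*} [Fintype ι] (w : ι → ℝ) (A : Set ι) : ℝ :=
  massOf w A / massOf w Set.univ

/-- FK weight of a configuration. -/
def fkWeight [Fintype E] (ends : E → Sym2 V) (α : Setoid V) (p q : ℝ) (ω : E → Bool) : ℝ :=
  p ^ (Finset.univ.filter fun e => ω e = true).card *
    (1 - p) ^ (Finset.univ.filter fun e => ω e = false).card *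
    q ^ numComponents ends α ω

/-- The FK (random cluster) probability measure `φ^α_{G,p,q}`. -/
def fkProb [Fintype E] (ends : E → Sym2 V) (α : Setoid V) (p q : ℝ)
    (A : Set (E → Bool)) : ℝ :=
  probOf (fkWeight ends α p q) A

/-- Inhomogeneous Bernoulli weight. -/
def berWeight [Fintype E] (pe : E → ℝ) (ω : E → Bool) : ℝ :=
  ∏ e, if ω e = true then pe e else 1 - pe e

/-- Inhomogeneous Bernoulli product measure `P_{(p_e)}`. -/
def berProb [Fintype E] (pe : E → ℝ) (A : Set (E → Bool)) : ℝ :=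
  probOf (berWeight pe) A

/-- Increasing sets of configurations. -/
def Increasing (A : Set (E → Bool)) : Prop :=
  ∀ ⦃ω ω' : E → Bool⦄, ω ∈ A → (∀ e, ω e ≤ ω' e) → ω' ∈ A

/-- Stochastic domination `μ ≼ ν`. -/
def StochDom [Fintype E] (μ ν : Set (E → Bool) → ℝ) : Prop :=
  ∀ A : Set (E → Bool), Increasing A → μ A ≤ ν A

/-- `Q_F(e)`: cutsets for `e` included in `F`. -/
def Cutsets (ends : E → Sym2 V) (α : Setoid V) (F : Set E) (e : E) : Set (Set E) :=
  {χ | χ ⊆ F ∧ ¬ EndsConn ends α {e' | e' ∉ χ ∧ e' ≠ e} e}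

/-!
Reveal the edges one at a time, those of `Ehat` first. Since `q > 1`, the conditional probability
that `e` is open is at most `p` whatever the other edges are, and it is at most `p'` as soon as a
closed cutset separates the endpoints of `e` off `e`, because opening `e` then merges two
components. For `e ∈ Ehat`, at the time `e` is revealed no edge of `Ehatᶜ` has been looked at;
given the past, the configuration on `Ehatᶜ` is still dominated by `P_p`, so the decreasing event
that `Ehatᶜ` contains a closed cutset has conditional probability at least its `P_p`-probability.
-/

section Components

variable {ends : E → Sym2 V} {α : Setoid V} {F G : Set E} {e : E} {ω ω' : E → Bool}

lemma map_of_le_surjective {X : Type*} {r s : Setoid X} (h : r ≤ s) :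
    Function.Surjective (Setoid.map_of_le h) :=
  Quotient.ind fun x => ⟨⟦x⟧, rfl⟩

lemma natCard_quotient_anti {X : Type*} [Finite X] {r s : Setoid X} (h : r ≤ s) :
    Nat.card (Quotient s) ≤ Nat.card (Quotient r) :=
  Nat.card_le_card_of_surjective _ (map_of_le_surjective h)

lemma natCard_quotient_strictAnti {X : Type*} [Finite X] {r s : Setoid X} (h : r < s) :
    Nat.card (Quotient s) < Nat.card (Quotient r) := by
  refine (natCard_quotient_anti h.le).lt_of_ne fun hcard => h.not_ge ?_
  have hbij : Function.Bijective (Setoid.map_of_le h.le) :=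
    (Nat.bijective_iff_surjective_and_card _).2 ⟨map_of_le_surjective h.le, hcard.symm⟩
  intro x y hxy
  have himage : Setoid.map_of_le h.le ⟦x⟧ = Setoid.map_of_le h.le ⟦y⟧ := Quotient.sound hxy
  exact Quotient.exact (hbij.injective himage)

lemma connSetoid_mono (h : F ⊆ G) : connSetoid ends α F ≤ connSetoid ends α G :=
  Setoid.eqvGen_mono fun _ _ ⟨e, he, hxy⟩ => ⟨e, h he, hxy⟩

lemma EndsConn.mono (h : F ⊆ G) (hF : EndsConn ends α F e) : EndsConn ends α G e :=
  fun x y hxy => connSetoid_mono h (hF x y hxy)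

lemma endsConn_of_mem (he : e ∈ F) : EndsConn ends α F e :=
  fun _ _ hxy => Relation.EqvGen.rel _ _ ⟨e, he, congrArg (Sym2.map (Quotient.mk α)) hxy⟩

lemma connSetoid_lt (h : F ⊆ G) (he : e ∈ G) (hF : ¬ EndsConn ends α F e) :
    connSetoid ends α F < connSetoid ends α G :=
  lt_of_le_not_ge (connSetoid_mono h) fun hGF =>
    hF fun x y hxy => hGF (endsConn_of_mem he x y hxy)

lemma setOf_open_subset (h : ω ≤ ω') : {e | ω e = true} ⊆ {e | ω' e = true} :=
  fun e he => Bool.eq_true_of_true_le (he ▸ h e)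

lemma numComponents_anti [Finite V] (h : ω ≤ ω') :
    numComponents ends α ω' ≤ numComponents ends α ω :=
  natCard_quotient_anti (connSetoid_mono (setOf_open_subset h))

lemma numComponents_lt [Finite V] (h : ω ≤ ω') (he : ω' e = true)
    (hω : ¬ EndsConn ends α {x | ω x = true} e) :
    numComponents ends α ω' < numComponents ends α ω :=
  natCard_quotient_strictAnti (connSetoid_lt (setOf_open_subset h) he hω)

end Components

section Update

variable {e : E} {S : Set E} {b : Bool}

lemma update_false_le_update_true (e : E) (ω : E → Bool) :
    Function.update ω e false ≤ Function.update ω e true :=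
  update_le_update_iff'.2 (Bool.false_le _)

lemma setOf_update_false_subset (e : E) (ω : E → Bool) :
    {x | Function.update ω e false x = true} ⊆ {x | ω x = true ∧ x ≠ e} := by
  intro x hx
  simp only [Set.mem_ofPred_eq, Function.update_apply] at hx ⊢
  split_ifs at hx with hxe
  exact ⟨hx, hxe⟩

lemma apply_update_of_dependsOn_compl {β : Type*} {f : (E → Bool) → β} (hf : DependsOn f {e}ᶜ)
    (ω : E → Bool) (b : Bool) : f (Function.update ω e b) = f ω :=
  hf fun _ hx => Function.update_of_ne hx _ _

lemma dependsOn_comp_update {β : Type*} {f : (E → Bool) → β} (hf : DependsOn f (insert e S)) :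
    DependsOn (fun ω => f (Function.update ω e b)) S := by
  intro ω ω' h
  refine hf fun x hx => ?_
  rcases eq_or_ne x e with rfl | hxe
  · simp only [Function.update_self]
  · simpa only [Function.update_of_ne hxe] using h x (hx.resolve_left hxe)

lemma sum_update_add_sum_update {R : Type*} [Semiring R] [Fintype E] (e : E)
    (F : (E → Bool) → R) :
    ∑ ω, (F (Function.update ω e true) + F (Function.update ω e false)) = 2 * ∑ ω, F ω := by
  have hflip : Function.Involutive fun ω : E → Bool => Function.update ω e (!ω e) := by
    intro ω
    simp only [Function.update_self, Bool.not_not, Function.update_idem, Function.update_eq_self]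
  have hpair (ω : E → Bool) : F (Function.update ω e true) + F (Function.update ω e false) =
      F ω + F (Function.update ω e (!ω e)) := by
    cases hω : ω e
    · rw [Bool.not_false, ← hω, Function.update_eq_self, add_comm]
    · rw [Bool.not_true, ← hω, Function.update_eq_self]
  have hsum : ∑ ω, F (Function.update ω e (!ω e)) = ∑ ω, F ω := Equiv.sum_comp hflip.toPerm F
  rw [Finset.sum_congr rfl fun ω _ => hpair ω, Finset.sum_add_distrib, hsum, two_mul]

end Update

lemma monotone_indicator_one {X : Type*} [Preorder X] {A : Set X} (hA : IsUpperSet A) :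
    Monotone (A.indicator (1 : X → ℝ)) := by
  intro x y hxy
  by_cases hx : x ∈ A
  · rw [Set.indicator_of_mem hx, Set.indicator_of_mem (hA hxy hx)]
    rfl
  · rw [Set.indicator_of_notMem hx]
    exact Set.indicator_nonneg (fun _ _ => zero_le_one) y

section Probability

variable {ι : Type*} [Fintype ι] [Fintype E] {pe : E → ℝ}

lemma massOf_eq_sum_indicator (w : ι → ℝ) (A : Set ι) :
    massOf w A = ∑ x, w x * A.indicator 1 x := by
  simp only [massOf, Finset.sum_filter, Set.indicator_apply, Pi.one_apply, mul_ite, mul_one,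
    mul_zero]

lemma massOf_univ (w : ι → ℝ) : massOf w Set.univ = ∑ x, w x := by
  simp only [massOf, Set.mem_univ, Finset.filter_true]

lemma sum_berWeight (pe : E → ℝ) : ∑ ω, berWeight pe ω = 1 := by
  simp only [berWeight]
  rw [← Fintype.prod_sum fun e (b : Bool) => if b = true then pe e else 1 - pe e]
  simp

lemma berProb_eq_sum_indicator (pe : E → ℝ) (A : Set (E → Bool)) :
    berProb pe A = ∑ ω, berWeight pe ω * A.indicator 1 ω := by
  rw [berProb, probOf, massOf_univ, sum_berWeight, div_one, massOf_eq_sum_indicator]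

lemma berWeight_nonneg (hpe : ∀ e, pe e ∈ Set.Icc 0 1) (ω : E → Bool) : 0 ≤ berWeight pe ω := by
  refine Finset.prod_nonneg fun e _ => ?_
  split_ifs
  exacts [(hpe e).1, sub_nonneg.2 (hpe e).2]

lemma berProb_mem_Icc (hpe : ∀ e, pe e ∈ Set.Icc 0 1) (A : Set (E → Bool)) :
    berProb pe A ∈ Set.Icc 0 1 := by
  have hind (ω : E → Bool) : A.indicator (1 : (E → Bool) → ℝ) ω ∈ Set.Icc 0 1 :=
    ⟨Set.indicator_nonneg (fun _ _ => zero_le_one) ω,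
      Set.indicator_le_self' (fun _ _ => zero_le_one) ω⟩
  rw [berProb_eq_sum_indicator]
  constructor
  · exact Finset.sum_nonneg fun ω _ => mul_nonneg (berWeight_nonneg hpe ω) (hind ω).1
  · exact (Finset.sum_le_sum fun ω _ =>
      mul_le_of_le_one_right (berWeight_nonneg hpe ω) (hind ω).2).trans_eq (sum_berWeight pe)

lemma berWeight_update (pe : E → ℝ) (e : E) (ω : E → Bool) (b : Bool) :
    berWeight pe (Function.update ω e b) = (if b = true then pe e else 1 - pe e) *
      ∏ x ∈ Finset.univ.erase e, if ω x = true then pe x else 1 - pe x := by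
  rw [berWeight, ← Finset.mul_prod_erase _ _ (Finset.mem_univ e), Function.update_self]
  congr 1
  refine Finset.prod_congr rfl fun x hx => ?_
  rw [Function.update_of_ne (Finset.ne_of_mem_erase hx)]

lemma one_sub_mul_berWeight_update_true (pe : E → ℝ) (e : E) (ω : E → Bool) :
    (1 - pe e) * berWeight pe (Function.update ω e true) =
      pe e * berWeight pe (Function.update ω e false) := by
  simp only [berWeight_update, if_true, Bool.false_eq_true, if_false]
  ring

lemma berProb_compl (pe : E → ℝ) (A : Set (E → Bool)) : berProb pe Aᶜ = 1 - berProb pe A := by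
  simp only [berProb_eq_sum_indicator, Set.indicator_compl, Pi.sub_apply, Pi.one_apply, mul_sub,
    mul_one, Finset.sum_sub_distrib, sum_berWeight]

end Probability

section Average

variable {e : E} {c : ℝ} {f : (E → Bool) → ℝ} {S : Set E}

/-- The indicator, as a real number, that the edge `e` is open. -/
def openIndicator (e : E) (ω : E → Bool) : ℝ := if ω e = true then 1 else 0

/-- The function `f` averaged over the state of `e`, which is resampled independently of the other
edges: open with probability `c` and closed with probability `1 - c`. -/
def averageAt (e : E) (c : ℝ) (f : (E → Bool) → ℝ) (ω : E → Bool) : ℝ :=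
  c * f (Function.update ω e true) + (1 - c) * f (Function.update ω e false)

lemma monotone_averageAt (hc : c ∈ Set.Icc 0 1) (hf : Monotone f) :
    Monotone (averageAt e c f) := by
  intro ω ω' h
  have hupdate (b : Bool) : f (Function.update ω e b) ≤ f (Function.update ω' e b) :=
    hf (update_le_update_iff.2 ⟨le_rfl, fun x _ => h x⟩)
  exact add_le_add (mul_le_mul_of_nonneg_left (hupdate true) hc.1)
    (mul_le_mul_of_nonneg_left (hupdate false) (sub_nonneg.2 hc.2))

lemma dependsOn_averageAt (hf : DependsOn f (insert e S)) : DependsOn (averageAt e c f) S := by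
  intro ω ω' h
  have hupdate (b : Bool) : f (Function.update ω e b) = f (Function.update ω' e b) :=
    dependsOn_comp_update hf h
  simp only [averageAt, hupdate]

lemma sub_averageAt (e : E) (c : ℝ) (f : (E → Bool) → ℝ) (ω : E → Bool) :
    f ω - averageAt e c f ω =
      (f (Function.update ω e true) - f (Function.update ω e false)) *
        (openIndicator e ω - c) := by
  cases hω : ω e
  · have hclosed : Function.update ω e false = ω := by rw [← hω, Function.update_eq_self]
    simp only [averageAt, openIndicator, hω, hclosed, Bool.false_eq_true, if_false]
    ring
  · have hopen : Function.update ω e true = ω := by rw [← hω, Function.update_eq_self]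
    simp only [averageAt, openIndicator, hω, hopen, if_true]
    ring

lemma sum_berWeight_mul_averageAt [Fintype E] (pe : E → ℝ) (e : E) (f : (E → Bool) → ℝ) :
    ∑ ω, berWeight pe ω * averageAt e (pe e) f ω = ∑ ω, berWeight pe ω * f ω := by
  rw [← mul_right_inj' (two_ne_zero (α := ℝ)), ← sum_update_add_sum_update e,
    ← sum_update_add_sum_update e]
  refine Finset.sum_congr rfl fun ω _ => ?_
  simp only [averageAt, Function.update_idem]
  linear_combination (f (Function.update ω e false) - f (Function.update ω e true)) *
    one_sub_mul_berWeight_update_true pe e ω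

end Average

section CondLE

variable [Fintype E] {w f g h : (E → Bool) → ℝ} {e : E} {S T : Set E}

/-- The inequality `𝔼[f | S] ≤ 𝔼[g | S]` of conditional expectations given the states of the edges
in `S`, under the measure with weight `w`. It is tested against the nonnegative functions of these
states, so that nothing has to be divided by the mass of a conditioning event. -/
def CondLE (w : (E → Bool) → ℝ) (S : Set E) (f g : (E → Bool) → ℝ) : Prop :=
  ∀ h : (E → Bool) → ℝ, 0 ≤ h → DependsOn h S → ∑ ω, w ω * h ω * f ω ≤ ∑ ω, w ω * h ω * g ω

lemma CondLE.anti (hST : S ⊆ T) (hT : CondLE w T f g) : CondLE w S f g :=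
  fun h h_nonneg hS => hT h h_nonneg (hS.mono hST)

lemma CondLE.trans (hfg : CondLE w S f g) (hgh : CondLE w S g h) : CondLE w S f h :=
  fun k k_nonneg hk => (hfg k k_nonneg hk).trans (hgh k k_nonneg hk)

lemma CondLE.const_sub_mul (hfg : CondLE w S f g) (a : ℝ) {b : ℝ} (hb : 0 ≤ b) :
    CondLE w S (fun ω => a - b * g ω) (fun ω => a - b * f ω) := by
  intro h h_nonneg hS
  have hsum (k : (E → Bool) → ℝ) : ∑ ω, w ω * h ω * (a - b * k ω) =
      a * ∑ ω, w ω * h ω - b * ∑ ω, w ω * h ω * k ω := by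
    rw [Finset.mul_sum, Finset.mul_sum, ← Finset.sum_sub_distrib]
    exact Finset.sum_congr rfl fun ω _ => by ring
  rw [hsum, hsum]
  exact sub_le_sub_left (mul_le_mul_of_nonneg_left (hfg h h_nonneg hS) hb) _

lemma CondLE.weight_mul (hfg : CondLE w S f g) (h_nonneg : 0 ≤ h) (hh : DependsOn h S) :
    CondLE (w * h) S f g := by
  intro k k_nonneg hk
  simpa only [Pi.mul_apply, mul_assoc] using
    hfg (h * k) (mul_nonneg h_nonneg k_nonneg) fun ω ω' hω => congrArg₂ (· * ·) (hh hω) (hk hω)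

lemma condLE_openIndicator_of_update (hg : DependsOn g {e}ᶜ)
    (hw : ∀ ω, (1 - g ω) * w (Function.update ω e true) ≤ g ω * w (Function.update ω e false)) :
    CondLE w {e}ᶜ (openIndicator e) g := by
  intro h h_nonneg hh
  rw [← mul_le_mul_iff_right₀ (two_pos (α := ℝ)), ← sum_update_add_sum_update e,
    ← sum_update_add_sum_update e]
  refine Finset.sum_le_sum fun ω _ => ?_
  simp only [openIndicator, Function.update_self, apply_update_of_dependsOn_compl hg,
    apply_update_of_dependsOn_compl hh, if_true, Bool.false_eq_true, if_false]
  linear_combination mul_le_mul_of_nonneg_left (hw ω) (h_nonneg ω)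

end CondLE

section DominatedOn

variable [Fintype E] {w : (E → Bool) → ℝ} {pe : E → ℝ} {e : E} {S T : Set E}

/-- Stochastic domination, on the states of the edges in `S`, of the measure with weight `w` (which
need not have total mass one) by the product measure with parameters `pe`. -/
def DominatedOn (w : (E → Bool) → ℝ) (pe : E → ℝ) (S : Set E) : Prop :=
  ∀ f : (E → Bool) → ℝ, Monotone f → DependsOn f S →
    ∑ ω, w ω * f ω ≤ (∑ ω, w ω) * ∑ ω, berWeight pe ω * f ω

lemma dominatedOn_empty (w : (E → Bool) → ℝ) (pe : E → ℝ) : DominatedOn w pe ∅ := by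
  intro f _ hf
  have hconst (ω : E → Bool) : f ω = f fun _ => true := hf.empty _ _
  simp only [hconst, ← Finset.sum_mul, sum_berWeight, one_mul, le_refl]

lemma DominatedOn.insert (hS : DominatedOn w pe S) (hpe : pe e ∈ Set.Icc 0 1)
    (he : CondLE w S (openIndicator e) fun _ => pe e) : DominatedOn w pe (insert e S) := by
  intro f hmono hf
  set d : (E → Bool) → ℝ := fun ω =>
    f (Function.update ω e true) - f (Function.update ω e false)
  have hd_nonneg : 0 ≤ d := fun ω => sub_nonneg.2 (hmono (update_false_le_update_true e ω))
  have hd_dep : DependsOn d S := fun ω ω' h =>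
    congrArg₂ (· - ·) (dependsOn_comp_update hf h) (dependsOn_comp_update hf h)
  have hdiff : ∑ ω, w ω * f ω - ∑ ω, w ω * averageAt e (pe e) f ω =
      ∑ ω, w ω * d ω * openIndicator e ω - ∑ ω, w ω * d ω * pe e := by
    rw [← Finset.sum_sub_distrib, ← Finset.sum_sub_distrib]
    refine Finset.sum_congr rfl fun ω _ => ?_
    rw [← mul_sub, sub_averageAt, ← mul_sub, mul_assoc]
  calc ∑ ω, w ω * f ω
      ≤ ∑ ω, w ω * averageAt e (pe e) f ω := by linarith [he d hd_nonneg hd_dep]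
    _ ≤ (∑ ω, w ω) * ∑ ω, berWeight pe ω * averageAt e (pe e) f ω :=
        hS _ (monotone_averageAt hpe hmono) (dependsOn_averageAt hf)
    _ = (∑ ω, w ω) * ∑ ω, berWeight pe ω * f ω := by rw [sum_berWeight_mul_averageAt]

lemma DominatedOn.union (hS : DominatedOn w pe S) (hpe : ∀ e ∈ T, pe e ∈ Set.Icc 0 1)
    (hT : ∀ e ∈ T, CondLE w (S ∪ T \ {e}) (openIndicator e) fun _ => pe e) :
    DominatedOn w pe (S ∪ T) := by
  suffices hsub : ∀ R ⊆ T, DominatedOn w pe (S ∪ R) from hsub T subset_rfl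
  intro R hR
  induction R, R.toFinite using Set.Finite.induction_on with
  | empty => rwa [Set.union_empty]
  | @insert e R heR _ ih =>
    have he : e ∈ T := hR (Set.mem_insert e R)
    have hRT : R ⊆ T := (Set.subset_insert e R).trans hR
    rw [Set.union_insert]
    exact (ih hRT).insert (hpe e he) ((hT e he).anti
      (Set.union_subset_union_right S (Set.subset_sdiff_singleton hRT heR)))

lemma dominatedOn_of_condLE (hpe : ∀ e ∈ T, pe e ∈ Set.Icc 0 1)
    (hT : ∀ e ∈ T, CondLE w (T \ {e}) (openIndicator e) fun _ => pe e) : DominatedOn w pe T := by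
  simpa only [Set.empty_union] using (dominatedOn_empty w pe).union hpe
    (by simpa only [Set.empty_union] using hT)

lemma DominatedOn.stochDom (hw : 0 < ∑ ω, w ω) (h : DominatedOn w pe Set.univ) :
    StochDom (probOf w) (berProb pe) := by
  intro A hA
  have hmono : Monotone (A.indicator (1 : (E → Bool) → ℝ)) :=
    monotone_indicator_one fun _ _ hle hω => hA hω hle
  rw [probOf, massOf_univ, massOf_eq_sum_indicator, berProb_eq_sum_indicator, div_le_iff₀' hw]
  exact h _ hmono (dependsOn_univ _)

end DominatedOn

section Enhancement

variable [Fintype E] {w : (E → Bool) → ℝ} {pe : E → ℝ} {e : E} {F H : Set E} {D : Set (E → Bool)}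

lemma condLE_berProb_indicator (hpe : ∀ e ∈ F, pe e ∈ Set.Icc 0 1)
    (hw : ∀ e ∈ F, CondLE w {e}ᶜ (openIndicator e) fun _ => pe e)
    (hlower : IsLowerSet D) (hD : DependsOn (· ∈ D) F) :
    CondLE w Fᶜ (fun _ => berProb pe D) (D.indicator 1) := by
  intro h h_nonneg hh
  -- The weight `w * h` plays the role of `w` conditioned on the states of the edges outside `F`.
  have hdom : DominatedOn (w * h) pe F := dominatedOn_of_condLE hpe fun e he =>
    ((hw e he).weight_mul h_nonneg (hh.mono (Set.compl_subset_compl.2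
      (Set.singleton_subset_iff.2 he)))).anti fun _ hx => hx.2
  have hcompl := hdom (Dᶜ.indicator 1) (monotone_indicator_one hlower.compl) fun ω ω' hω => by
    simp only [Set.indicator_apply, Set.mem_compl_iff, hD hω, Pi.one_apply]
  rw [← berProb_eq_sum_indicator, berProb_compl] at hcompl
  simp only [Set.indicator_compl, Pi.sub_apply, Pi.one_apply, Pi.mul_apply, mul_sub, mul_one,
    Finset.sum_sub_distrib] at hcompl
  rw [← Finset.sum_mul]
  linarith

lemma condLE_openIndicator_sub_berProb {c δ : ℝ} (hδ : 0 ≤ δ)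
    (hpe : ∀ x ∈ F, pe x ∈ Set.Icc 0 1)
    (hw : ∀ x ∈ F, CondLE w {x}ᶜ (openIndicator x) fun _ => pe x)
    (hwD : CondLE w {e}ᶜ (openIndicator e) fun ω => c - δ * D.indicator 1 ω)
    (hlower : IsLowerSet D) (hD : DependsOn (· ∈ D) F) :
    CondLE w (Fᶜ \ {e}) (openIndicator e) fun _ => c - δ * berProb pe D :=
  (hwD.anti fun _ hx => hx.2).trans
    (((condLE_berProb_indicator hpe hw hlower hD).const_sub_mul c hδ).anti Set.sdiff_subset)

lemma sub_mul_berProb_mem_Icc {c δ : ℝ} (hc : c ≤ 1) (hδ : δ ∈ Set.Icc 0 c)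
    (hpe : ∀ e, pe e ∈ Set.Icc 0 1) : c - δ * berProb pe D ∈ Set.Icc 0 1 := by
  obtain ⟨hprob_nonneg, hprob_le⟩ := berProb_mem_Icc hpe D
  exact ⟨sub_nonneg.2 ((mul_le_of_le_one_right hδ.1 hprob_le).trans hδ.2),
    (sub_le_self _ (mul_nonneg hδ.1 hprob_nonneg)).trans hc⟩

theorem dominatedOn_univ_sub_berProb {δ : E → ℝ} {D : E → Set (E → Bool)}
    (hpe : ∀ e, pe e ∈ Set.Icc 0 1) (hδ : ∀ e ∈ H, δ e ∈ Set.Icc 0 (pe e))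
    (hw : ∀ e, CondLE w {e}ᶜ (openIndicator e) fun _ => pe e)
    (hwD : ∀ e ∈ H, CondLE w {e}ᶜ (openIndicator e) fun ω => pe e - δ e * (D e).indicator 1 ω)
    (hlower : ∀ e ∈ H, IsLowerSet (D e)) (hD : ∀ e ∈ H, DependsOn (· ∈ D e) Hᶜ) :
    DominatedOn w (fun e => pe e - if e ∈ H then δ e * berProb pe (D e) else 0) Set.univ := by
  rw [← Set.union_compl_self H]
  refine DominatedOn.union (dominatedOn_of_condLE (fun e he => ?_) fun e he => ?_)
    (fun e he => ?_) fun e he => ?_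
  · rw [if_pos he]
    exact sub_mul_berProb_mem_Icc (hpe e).2 (hδ e he) hpe
  · rw [if_pos he]
    simpa only [compl_compl] using condLE_openIndicator_sub_berProb (hδ e he).1
      (fun x _ => hpe x) (fun x _ => hw x) (hwD e he) (hlower e he) (hD e he)
  · rw [if_neg he, sub_zero]
    exact hpe e
  · rw [if_neg he, sub_zero]
    exact (hw e).anti (Set.union_subset (Set.subset_compl_singleton_iff.2 he) fun _ hx => hx.2)

end Enhancement

section FKWeight

variable [Fintype E] {ends : E → Sym2 V} {α : Setoid V} {p q : ℝ} {e : E} {ω : E → Bool}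

lemma one_lt_of_pPrime_lt (hp : p ∈ Set.Ioo 0 1) (hq : 0 < q) (h : pPrime p q < p) : 1 < q := by
  have hden : 0 < p + q * (1 - p) := add_pos hp.1 (mul_pos hq (sub_pos.2 hp.2))
  rw [pPrime, div_lt_iff₀ hden, lt_mul_iff_one_lt_right hp.1] at h
  exact lt_of_mul_lt_mul_right (by linarith) (sub_nonneg.2 hp.2.le)

lemma pPrime_nonneg (hp : p ∈ Set.Icc 0 1) (hq : 0 ≤ q) : 0 ≤ pPrime p q :=
  div_nonneg hp.1 (add_nonneg hp.1 (mul_nonneg hq (sub_nonneg.2 hp.2)))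

lemma fkWeight_eq_berWeight_mul (ends : E → Sym2 V) (α : Setoid V) (p q : ℝ) (ω : E → Bool) :
    fkWeight ends α p q ω = berWeight (fun _ => p) ω * q ^ numComponents ends α ω := by
  simp only [fkWeight, berWeight, Finset.prod_ite, Finset.prod_const, Bool.not_eq_true]

lemma fkWeight_pos (hp : p ∈ Set.Ioo 0 1) (hq : 0 < q) (ω : E → Bool) :
    0 < fkWeight ends α p q ω :=
  mul_pos (mul_pos (pow_pos hp.1 _) (pow_pos (sub_pos.2 hp.2) _)) (pow_pos hq _)

lemma one_sub_mul_fkWeight_update_true_le [Finite V] (hp : p ∈ Set.Icc 0 1) (hq : 1 ≤ q) :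
    (1 - p) * fkWeight ends α p q (Function.update ω e true) ≤
      p * fkWeight ends α p q (Function.update ω e false) := by
  have hk : numComponents ends α (Function.update ω e true) ≤
      numComponents ends α (Function.update ω e false) :=
    numComponents_anti (update_false_le_update_true e ω)
  rw [fkWeight_eq_berWeight_mul, fkWeight_eq_berWeight_mul, ← mul_assoc, ← mul_assoc,
    one_sub_mul_berWeight_update_true (fun _ => p)]
  exact mul_le_mul_of_nonneg_left (pow_le_pow_right₀ hq hk)
    (mul_nonneg hp.1 (berWeight_nonneg (fun _ => hp) _))

lemma one_sub_pPrime_mul_fkWeight_update_true_le [Finite V] (hp : p ∈ Set.Icc 0 1) (hq : 1 ≤ q)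
    (he : ¬ EndsConn ends α {x | ω x = true ∧ x ≠ e} e) :
    (1 - pPrime p q) * fkWeight ends α p q (Function.update ω e true) ≤
      pPrime p q * fkWeight ends α p q (Function.update ω e false) := by
  have hden : 0 < p + q * (1 - p) := by
    linarith [le_mul_of_one_le_left (sub_nonneg.2 hp.2) hq]
  have hk : numComponents ends α (Function.update ω e true) <
      numComponents ends α (Function.update ω e false) :=
    numComponents_lt (update_false_le_update_true e ω) (Function.update_self e true ω)
      fun hconn => he (hconn.mono (setOf_update_false_subset e ω))
  have hp' : pPrime p q * (p + q * (1 - p)) = p := div_mul_cancel₀ p hden.ne'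
  refine le_of_mul_le_mul_right ?_ hden
  calc (1 - pPrime p q) * fkWeight ends α p q (Function.update ω e true) * (p + q * (1 - p))
      = p * berWeight (fun _ => p) (Function.update ω e false) *
          q ^ (numComponents ends α (Function.update ω e true) + 1) := by
        rw [fkWeight_eq_berWeight_mul]
        linear_combination
          -(berWeight (fun _ => p) (Function.update ω e true) *
            q ^ numComponents ends α (Function.update ω e true)) * hp' +
          q ^ (numComponents ends α (Function.update ω e true) + 1) *
            one_sub_mul_berWeight_update_true (fun _ => p) e ω
    _ ≤ p * berWeight (fun _ => p) (Function.update ω e false) *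
          q ^ numComponents ends α (Function.update ω e false) :=
        mul_le_mul_of_nonneg_left (pow_le_pow_right₀ hq hk)
          (mul_nonneg hp.1 (berWeight_nonneg (fun _ => hp) _))
    _ = pPrime p q * fkWeight ends α p q (Function.update ω e false) * (p + q * (1 - p)) := by
        rw [mul_right_comm (pPrime p q), hp', fkWeight_eq_berWeight_mul, mul_assoc]

lemma condLE_fkWeight_openIndicator [Finite V] (hp : p ∈ Set.Icc 0 1) (hq : 1 ≤ q) (e : E) :
    CondLE (fkWeight ends α p q) {e}ᶜ (openIndicator e) fun _ => p :=
  condLE_openIndicator_of_update ((dependsOn_const p).mono (Set.empty_subset _)) fun _ =>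
    one_sub_mul_fkWeight_update_true_le hp hq

lemma condLE_fkWeight_openIndicator_of_not_endsConn [Finite V] {D : Set (E → Bool)}
    (hp : p ∈ Set.Icc 0 1) (hq : 1 ≤ q) (hD : DependsOn (· ∈ D) {e}ᶜ)
    (hsep : ∀ ω ∈ D, ¬ EndsConn ends α {x | ω x = true ∧ x ≠ e} e) :
    CondLE (fkWeight ends α p q) {e}ᶜ (openIndicator e)
      fun ω => p - (p - pPrime p q) * D.indicator 1 ω := by
  refine condLE_openIndicator_of_update (fun ω ω' h => ?_) fun ω => ?_
  · simp only [Set.indicator_apply, hD h, Pi.one_apply]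
  by_cases hω : ω ∈ D
  · simpa only [Set.indicator_of_mem hω, Pi.one_apply, mul_one, sub_sub_cancel] using
      one_sub_pPrime_mul_fkWeight_update_true_le hp hq (hsep ω hω)
  · simpa only [Set.indicator_of_notMem hω, mul_zero, sub_zero] using
      one_sub_mul_fkWeight_update_true_le hp hq

end FKWeight

section ClosedCutset

variable {ends : E → Sym2 V} {α : Setoid V} {F : Set E} {e : E} {ω : E → Bool}

/-- The event that some cutset for `e` included in `F` has all its edges closed. -/
def closedCutset (ends : E → Sym2 V) (α : Setoid V) (F : Set E) (e : E) : Set (E → Bool) :=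
  {ω | ∃ χ ∈ Cutsets ends α F e, ∀ e' ∈ χ, ω e' = false}

lemma isLowerSet_closedCutset : IsLowerSet (closedCutset ends α F e) :=
  fun _ _ hle ⟨χ, hχ, hclosed⟩ =>
    ⟨χ, hχ, fun x hx => Bool.eq_false_of_le_false (hclosed x hx ▸ hle x)⟩

lemma dependsOn_closedCutset : DependsOn (· ∈ closedCutset ends α F e) F := by
  have himp {ω ω' : E → Bool} (h : ∀ x ∈ F, ω x = ω' x) (hω : ω ∈ closedCutset ends α F e) :
      ω' ∈ closedCutset ends α F e := by
    obtain ⟨χ, hχ, hclosed⟩ := hω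
    exact ⟨χ, hχ, fun x hx => (h x (hχ.1 hx)).symm.trans (hclosed x hx)⟩
  exact fun ω ω' h => propext ⟨himp h, himp fun x hx => (h x hx).symm⟩

lemma not_endsConn_of_mem_closedCutset (hω : ω ∈ closedCutset ends α F e) :
    ¬ EndsConn ends α {x | ω x = true ∧ x ≠ e} e := by
  obtain ⟨χ, hχ, hclosed⟩ := hω
  refine fun hconn => hχ.2 (hconn.mono fun x hx => ⟨fun hxχ => ?_, hx.2⟩)
  exact Bool.false_ne_true ((hclosed x hxχ).symm.trans hx.1)

end ClosedCutset

/-- **Proposition 3.1, item 2** (upper enhancement via cutsets, case `p > p'`). -/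
theorem above_enhancement_of_gt_cutsets
    {V E : Type*} [Fintype V] [Fintype E]
    (ends : E → Sym2 V) (α : Setoid V)
    (p q : ℝ) (hp : p ∈ Set.Ioo (0 : ℝ) 1) (hq : 0 < q)
    (hpp' : pPrime p q < p)
    (Ehat : Set E)
    (hcut : ∀ e ∈ Ehat, ∃ χ : Set E, χ ∈ Cutsets ends α Ehatᶜ e)
    (εhat : E → ℝ)
    (hε : ∀ e, εhat e =
      if e ∈ Ehat then
        (p - pPrime p q) *
          berProb (fun _ => max p (pPrime p q))
            {ω | ∃ χ ∈ Cutsets ends α Ehatᶜ e, ∀ e' ∈ χ, ω e' = false}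
      else 0) :
    StochDom (fkProb ends α p q) (berProb fun e => p - εhat e) := by
  have hq1 : 1 ≤ q := (one_lt_of_pPrime_lt hp hq hpp').le
  have hpIcc : p ∈ Set.Icc 0 1 := Set.Ioo_subset_Icc_self hp
  rw [max_eq_left hpp'.le] at hε
  obtain rfl := funext hε
  have hmass : 0 < ∑ ω, fkWeight ends α p q ω :=
    Finset.sum_pos (fun ω _ => fkWeight_pos hp hq ω) Finset.univ_nonempty
  have hgap : p - pPrime p q ∈ Set.Icc 0 p :=
    ⟨sub_nonneg.2 hpp'.le, sub_le_self p (pPrime_nonneg hpIcc hq.le)⟩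
  have hcutset (e : E) (he : e ∈ Ehat) :
      CondLE (fkWeight ends α p q) {e}ᶜ (openIndicator e)
        fun ω => p - (p - pPrime p q) * (closedCutset ends α Ehatᶜ e).indicator 1 ω :=
    condLE_fkWeight_openIndicator_of_not_endsConn hpIcc hq1
      (dependsOn_closedCutset.mono (Set.compl_subset_compl.2 (Set.singleton_subset_iff.2 he)))
      fun _ => not_endsConn_of_mem_closedCutset
  exact (dominatedOn_univ_sub_berProb (fun _ => hpIcc) (fun _ _ => hgap)
    (condLE_fkWeight_openIndicator hpIcc hq1) hcutset (fun _ _ => isLowerSet_closedCutset)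
    fun _ _ => dependsOn_closedCutset).stochDom hmass

end FKPaper
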